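/- Let a fusion datum on a countable type I admit a sequence (F_n) of nonempty finite subsets of I such that both |∂_γ F_n|_w / |F_n|_w → 0 and |∂ᴸ_γ F_n|_w / |F_n|_w → 0 as n → ∞, for every γ ∈ I. Let A be a nontrivial (1 ≠ 0) unital C*-algebra, let (T_α)_{α∈I} be a CFA-type action of the fusion datum on A, and set σ_α := (1/(d α))·T_α. Then: (i) there exists a state ψ on A with ψ(σ_α(a)) = ψ(a) for all α ∈ I and a ∈ A (an FA-invariant state exists); and (ii) the sequence ξ_n : I → A defined by ξ_n(α) := |F_n|_w^{-1/2}·(d α)·1_A for α ∈ F_n and ξ_n(α) := 0 otherwise, satisfies ⟨ξ_n|ξ_n⟩_A = 1_A, ξ_n(α)·a = a·ξ_n(α) for all α and a, and ‖δ_γ *_σ ξ_n − ξ_n‖_{2,A} → 0 for every γ ∈ I; that is, the action is FA-amenable. -/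

import Mathlib

open scoped BigOperators
open Filter
open scoped Classical

/-- A fusion datum on a type `I`: unit, structure constants, involution and a
dimension function satisfying the unit laws, Frobenius reciprocity and
multiplicativity of the dimension function. -/
structure FusionDatum (I : Type*) where
  e : I
  N : I → I → I → ℕ
  conj : I → I
  d : I → ℝ
  conj_e : conj e = e
  conj_conj : ∀ α, conj (conj α) = α
  N_conj : ∀ α β γ, N α β γ = N (conj β) (conj α) (conj γ)
  one_le_d : ∀ α, 1 ≤ d α
  d_conj : ∀ α, d (conj α) = d α
  N_unit_left : ∀ α γ, N e α γ = if γ = α then 1 else 0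
  N_unit_right : ∀ α γ, N α e γ = if γ = α then 1 else 0
  frobenius₁ : ∀ α β γ, N α β γ = N γ (conj β) α
  frobenius₂ : ∀ α β γ, N α β γ = N (conj α) γ β
  mul_support_finite : ∀ α β, (Function.support fun γ => (N α β γ : ℝ) * d γ).Finite
  d_mul : ∀ α β, (∑ᶠ γ, (N α β γ : ℝ) * d γ) = d α * d β

/-- Weighted cardinality `|S|_w = Σ_{α∈S} (d α)²` of a set. -/
noncomputable def FusionDatum.wcard {I : Type*} (F : FusionDatum I) (S : Set I) : ℝ :=
  ∑ᶠ α ∈ S, F.d α ^ 2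

/-- Right γ-boundary `∂_γ S`. -/
def FusionDatum.rBoundary {I : Type*} (F : FusionDatum I) (γ : I) (S : Set I) : Set I :=
  {α | (α ∈ S ∧ ∃ β ∉ S, 0 < F.N α γ β) ∨ (α ∉ S ∧ ∃ β ∈ S, 0 < F.N α γ β)}

/-- Left γ-boundary `∂ᴸ_γ S`. -/
def FusionDatum.lBoundary {I : Type*} (F : FusionDatum I) (γ : I) (S : Set I) : Set I :=
  {α | (α ∈ S ∧ ∃ β ∉ S, 0 < F.N γ α β) ∨ (α ∉ S ∧ ∃ β ∈ S, 0 < F.N γ α β)}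

/-- ℓ²-norm `(Σ_β |g β|²)^{1/2}` of a (finitely supported) function. -/
noncomputable def l2norm {I : Type*} (g : I → ℂ) : ℝ :=
  Real.sqrt (∑ᶠ β, ‖g β‖ ^ 2)

/-- The convolution operator `l_γ`. -/
noncomputable def FusionDatum.lconv {I : Type*} (F : FusionDatum I) (γ : I) (f : I → ℂ) :
    I → ℂ :=
  fun β => (1 / (F.d γ : ℂ)) * ∑ᶠ η, (F.N γ η β : ℂ) * f η

/-- A state on a unital C*-algebra: a unital positive linear functional. -/
structure CStarState (A : Type*) [NormedRing A] [StarRing A] [NormedAlgebra ℂ A] where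
  toFun : A →ₗ[ℂ] ℂ
  map_one : toFun 1 = 1
  pos : ∀ a : A, 0 ≤ (toFun (star a * a)).re ∧ (toFun (star a * a)).im = 0

/-- A CFA-type action of a fusion datum on a unital C*-algebra: `T α a` encodes `χ(α)·a`. -/
structure CFAAction {I : Type*} (F : FusionDatum I) (A : Type*)
    [NormedRing A] [StarRing A] [NormedAlgebra ℂ A] where
  T : I → A →ₗ[ℂ] A
  map_star : ∀ α a, T α (star a) = star (T α a)
  norm_le : ∀ α a, ‖T α a‖ ≤ F.d α * ‖a‖
  map_one : ∀ α, T α 1 = (F.d α : ℂ) • (1 : A)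
  comp_eq : ∀ α β a, T α (T β a) = ∑ᶠ γ, (F.N α β γ) • T γ a

/-- `⟨f|f⟩_A = Σ_α f α · (f α)*`. -/
noncomputable def innerA {I A : Type*} [NormedRing A] [StarRing A] (f : I → A) : A :=
  ∑ᶠ α, f α * star (f α)

/-- `‖f‖_{2,A} = ‖⟨f|f⟩_A‖^{1/2}`. -/
noncomputable def norm2A {I A : Type*} [NormedRing A] [StarRing A] (f : I → A) : ℝ :=
  Real.sqrt ‖innerA f‖

/-- Twisted convolution `(δ_γ *_σ f)(β) = (1/(d γ))·Σ_η N γ η β · σ_γ(f η)`. -/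
noncomputable def FusionDatum.tconv {I A : Type*} [NormedRing A] [NormedAlgebra ℂ A]
    (F : FusionDatum I) (σ : I → A → A) (γ : I) (f : I → A) : I → A :=
  fun β => (((F.d γ)⁻¹ : ℝ) : ℂ) • ∑ᶠ η, (F.N γ η β) • σ γ (f η)

/-- The ℂ-valued Følner vectors `ξ_F = |F|_w^{-1/2} Σ_{α∈F} d α · δ_α`. -/
noncomputable def xiC {I : Type*} (F : FusionDatum I) (S : Finset I) : I → ℂ :=
  fun α => if α ∈ S then (((Real.sqrt (F.wcard (S : Set I)))⁻¹ * F.d α : ℝ) : ℂ) else 0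

/-- The A-valued Følner vectors `ξ_F = |F|_w^{-1/2} Σ_{α∈F} d α · δ_α ⊗ 1_A`. -/
noncomputable def xiA {I : Type*} (F : FusionDatum I) (S : Finset I)
    (A : Type*) [NormedRing A] [NormedAlgebra ℂ A] : I → A :=
  fun α => if α ∈ S then (((Real.sqrt (F.wcard (S : Set I)))⁻¹ * F.d α : ℝ) : ℂ) • (1 : A)
    else 0

/-- The normalized action `σ_α = (1/(d α))·T_α` of the CFA form. -/
noncomputable def cfaSigma {I : Type*} (F : FusionDatum I) {A : Type*}
    [NormedRing A] [StarRing A] [NormedAlgebra ℂ A]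
    (act : CFAAction F A) : I → A → A :=
  fun α a => (((F.d α)⁻¹ : ℝ) : ℂ) • act.T α a

section Helpers

theorem kernel_bound {I : Type*} (d : I → ℝ) (hd : ∀ α, 1 ≤ d α) (K : I → I → ℕ) (D : ℝ)
    (hD : 1 ≤ D) (hfin : ∀ β, (Function.support fun η => (K β η : ℝ) * d η).Finite)
    (hsum : ∀ β, ∑ᶠ η, (K β η : ℝ) * d η = D * d β) (S : Finset I) (β : I) :
    |D⁻¹ * ∑ η ∈ S, (K β η : ℝ) * d η - (if β ∈ S then d β else 0)| ≤
      if (β ∈ (S : Set I) ∧ ∃ η ∉ (S : Set I), 0 < K β η) ∨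
        (β ∉ (S : Set I) ∧ ∃ η ∈ (S : Set I), 0 < K β η) then d β else 0 := by
  have hD0 : 0 < D := by linarith
  have hnn : ∀ η, 0 ≤ (K β η : ℝ) * d η := fun η =>
    mul_nonneg (Nat.cast_nonneg _) (by linarith [hd η])
  have h0 : 0 ≤ ∑ η ∈ S, (K β η : ℝ) * d η := Finset.sum_nonneg fun η _ => hnn η
  have hU : ∑ᶠ η, (K β η : ℝ) * d η = ∑ η ∈ S ∪ (hfin β).toFinset, (K β η : ℝ) * d η := by
    apply finsum_eq_sum_of_support_subset
    intro x hx
    simp only [Finset.coe_union, Set.Finite.coe_toFinset]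
    exact Or.inr hx
  have hle : ∑ η ∈ S, (K β η : ℝ) * d η ≤ D * d β := by
    rw [← hsum, hU]
    exact Finset.sum_le_sum_of_subset_of_nonneg Finset.subset_union_left fun η _ _ => hnn η
  have hc0 : 0 ≤ D⁻¹ * ∑ η ∈ S, (K β η : ℝ) * d η := by positivity
  have hc1 : D⁻¹ * ∑ η ∈ S, (K β η : ℝ) * d η ≤ d β := by
    rw [inv_mul_le_iff₀ hD0]; exact hle
  split_ifs with h1 h2 h2
  · rw [abs_le]; constructor <;> linarith
  · push Not at h2
    have : ∑ᶠ η, (K β η : ℝ) * d η = ∑ η ∈ S, (K β η : ℝ) * d η := by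
      apply finsum_eq_sum_of_support_subset
      intro x hx
      by_contra hxS
      have := h2.1 h1 x hxS
      apply hx
      simp only [Nat.le_zero.mp this]
      simp
    rw [← this, hsum, inv_mul_cancel_left₀ hD0.ne']
    simp
  · rw [abs_le]; constructor <;> linarith
  · push Not at h2
    have : ∑ η ∈ S, (K β η : ℝ) * d η = 0 := by
      apply Finset.sum_eq_zero
      intro x hx
      rw [Nat.le_zero.mp (h2.2 h1 x hx)]
      simp
    rw [this]; simp

theorem contractive_pos {A : Type*} [NormedRing A] [StarRing A] [CStarRing A] [NormedAlgebra ℂ A]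
    [StarModule ℂ A] [CompleteSpace A] [Nontrivial A] (ψ : A →ₗ[ℂ] ℂ) (h1 : ψ 1 = 1)
    (hn : ∀ a, ‖ψ a‖ ≤ ‖a‖) (a : A) :
    0 ≤ (ψ (star a * a)).re ∧ (ψ (star a * a)).im = 0 := by
  let _ : CStarAlgebra A := {}
  let _ : PartialOrder A := CStarAlgebra.spectralOrder A
  have _ : StarOrderedRing A := CStarAlgebra.spectralOrderedRing A
  set b := star a * a with hb
  have hb0 : 0 ≤ b := star_mul_self_nonneg a
  have hbs : star b = b := (IsSelfAdjoint.of_nonneg hb0)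
  constructor
  · have h2 : b ≤ algebraMap ℝ A ‖b‖ := IsSelfAdjoint.le_algebraMap_norm_self hbs
    have h3 : ‖algebraMap ℝ A ‖b‖ - b‖ ≤ ‖b‖ := by
      rw [CStarAlgebra.norm_le_iff_le_algebraMap _ (norm_nonneg _) (sub_nonneg.mpr h2)]
      exact sub_le_self _ hb0
    have h4 := (hn _).trans h3
    have h5 : algebraMap ℝ A ‖b‖ = ((‖b‖ : ℝ) : ℂ) • (1 : A) := by
      rw [Algebra.algebraMap_eq_smul_one]; rfl
    rw [h5, map_sub, map_smul, h1] at h4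
    have h6 := (Complex.re_le_norm _).trans h4
    simp at h6
    exact h6
  · have key : ∀ t : ℝ, ((ψ b).im + t) ^ 2 ≤ ‖b‖ ^ 2 + t ^ 2 := by
      intro t
      set c := b + ((t : ℂ) * Complex.I) • (1 : A) with hc
      have e1 : ‖c‖ ^ 2 ≤ ‖b‖ ^ 2 + t ^ 2 := by
        have e2 : star c * c = b * b + ((t ^ 2 : ℝ) : ℂ) • (1 : A) := by
          rw [hc, star_add, star_smul, hbs, star_one]
          simp only [add_mul, mul_add, smul_mul_assoc, mul_smul_comm, one_mul, mul_one]
          have : star ((t : ℂ) * Complex.I) = -((t : ℂ) * Complex.I) := by simp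
          rw [this]
          have h7 : -((t : ℂ) * Complex.I) * ((t : ℂ) * Complex.I) = ((t ^ 2 : ℝ) : ℂ) := by
            push_cast; linear_combination (-(t : ℂ) ^ 2) * Complex.I_sq
          rw [← h7]
          module
        rw [sq, ← CStarRing.norm_star_mul_self, e2]
        refine (norm_add_le _ _).trans ?_
        rw [norm_smul, norm_one, mul_one, Complex.norm_real, Real.norm_eq_abs,
          abs_of_nonneg (sq_nonneg t), sq ‖b‖]
        gcongr
        exact norm_mul_le _ _
      have e3 : (ψ c).im = (ψ b).im + t := by
        rw [hc, map_add, map_smul, h1]; simp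
      have e4 : |(ψ c).im| ≤ ‖c‖ := (Complex.abs_im_le_norm _).trans (hn c)
      rw [← e3, ← sq_abs]
      exact (pow_le_pow_left₀ (abs_nonneg _) e4 2).trans e1
    by_contra hne
    set y := (ψ b).im
    have := key ((‖b‖ ^ 2 + 1) / y)
    have h8 : (y + (‖b‖ ^ 2 + 1) / y) ^ 2 =
      y ^ 2 + 2 * (‖b‖ ^ 2 + 1) + ((‖b‖ ^ 2 + 1) / y) ^ 2 := by field_simp; ring
    rw [h8] at this
    nlinarith [sq_nonneg y, sq_nonneg ‖b‖]

variable {I : Type*}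

theorem d_pos (F : FusionDatum I) (α : I) : 0 < F.d α := by linarith [F.one_le_d α]

theorem N_finite (F : FusionDatum I) (α β : I) : {γ | 0 < F.N α β γ}.Finite := by
  refine (F.mul_support_finite α β).subset ?_
  intro γ hγ
  have : 0 < F.N α β γ := hγ
  have := d_pos F γ
  simp only [Function.mem_support]
  positivity

theorem rB_finite (F : FusionDatum I) (γ : I) (S : Finset I) :
    (F.rBoundary γ (S : Set I)).Finite := by
  refine (S.finite_toSet.union (S.finite_toSet.biUnion
    fun β _ => N_finite F β (F.conj γ))).subset ?_
  rintro α (⟨h, -⟩ | ⟨-, β, hβ, h⟩)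
  · exact Or.inl h
  · refine Or.inr (Set.mem_biUnion hβ ?_)
    rw [F.frobenius₁] at h; exact h

theorem lB_finite (F : FusionDatum I) (γ : I) (S : Finset I) :
    (F.lBoundary γ (S : Set I)).Finite := by
  refine (S.finite_toSet.union (S.finite_toSet.biUnion
    fun β _ => N_finite F (F.conj γ) β)).subset ?_
  rintro α (⟨h, -⟩ | ⟨-, β, hβ, h⟩)
  · exact Or.inl h
  · refine Or.inr (Set.mem_biUnion hβ ?_)
    rw [F.frobenius₂] at h; exact h

theorem wcard_coe (F : FusionDatum I) (S : Finset I) :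
    F.wcard (S : Set I) = ∑ α ∈ S, F.d α ^ 2 := by
  unfold FusionDatum.wcard
  exact finsum_mem_coe_finset _ _

theorem wcard_pos (F : FusionDatum I) (S : Finset I) (h : S.Nonempty) :
    0 < F.wcard (S : Set I) := by
  rw [wcard_coe]
  exact Finset.sum_pos (fun α _ => pow_pos (d_pos F α) 2) h

theorem wcard_fin (F : FusionDatum I) (S : Set I) (h : S.Finite) (V : Finset I)
    (hV : S ⊆ V) : F.wcard S = ∑ α ∈ V, if α ∈ S then F.d α ^ 2 else 0 := by
  unfold FusionDatum.wcard
  rw [finsum_mem_eq_finite_toFinset_sum _ h, ← Finset.sum_filter]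
  apply Finset.sum_congr _ fun _ _ => rfl
  ext x
  simp only [Set.Finite.mem_toFinset, Finset.mem_filter]
  exact ⟨fun hx => ⟨hV hx, hx⟩, fun hx => hx.2⟩

theorem r_bound (F : FusionDatum I) (γ : I) (S : Finset I) (β : I) :
    |(F.d γ)⁻¹ * ∑ η ∈ S, (F.N η γ β : ℝ) * F.d η - (if β ∈ S then F.d β else 0)| ≤
      if β ∈ F.rBoundary (F.conj γ) (S : Set I) then F.d β else 0 := by
  have := kernel_bound F.d F.one_le_d (fun β η => F.N β (F.conj γ) η) (F.d γ) (F.one_le_d γ)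
    (fun β => F.mul_support_finite _ _)
    (fun β => by rw [F.d_mul, F.d_conj, mul_comm]) S β
  simp only [F.frobenius₁ _ γ β]
  convert this
  exact Iff.rfl

theorem l_bound (F : FusionDatum I) (γ : I) (S : Finset I) (β : I) :
    |(F.d γ)⁻¹ * ∑ η ∈ S, (F.N γ η β : ℝ) * F.d η - (if β ∈ S then F.d β else 0)| ≤
      if β ∈ F.lBoundary (F.conj γ) (S : Set I) then F.d β else 0 := by
  have := kernel_bound F.d F.one_le_d (fun β η => F.N (F.conj γ) β η) (F.d γ) (F.one_le_d γ)
    (fun β => F.mul_support_finite _ _)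
    (fun β => by rw [F.d_mul, F.d_conj]) S β
  simp only [F.frobenius₂ γ _ β]
  convert this
  exact Iff.rfl

variable {A : Type*} [NormedRing A] [StarRing A] [CStarRing A] [NormedAlgebra ℂ A]
    [StarModule ℂ A] [CompleteSpace A] [Nontrivial A]

theorem innerA_smul_one (g : I → ℝ) (V : Finset I) (hV : ∀ β ∉ V, g β = 0) :
    innerA (fun β => ((g β : ℝ) : ℂ) • (1 : A)) = ((∑ β ∈ V, g β ^ 2 : ℝ) : ℂ) • (1 : A) := by
  unfold innerA
  rw [finsum_eq_sum_of_support_subset (s := V)]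
  · push_cast
    rw [Finset.sum_smul]
    refine Finset.sum_congr rfl fun β _ => ?_
    rw [star_smul, star_one, smul_mul_smul_comm, one_mul]
    simp [sq]
  · intro x hx
    by_contra hxV
    apply hx
    simp [hV x hxV]

theorem xiA_eq (F : FusionDatum I) (S : Finset I) :
    xiA F S A = fun α => (((if α ∈ S then (Real.sqrt (F.wcard (S : Set I)))⁻¹ * F.d α else 0 : ℝ)) : ℂ) • (1 : A) := by
  funext α
  unfold xiA
  split_ifs <;> simp

theorem tconv_xi (F : FusionDatum I) (act : CFAAction F A) (γ : I) (S : Finset I) :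
    F.tconv (cfaSigma F act) γ (xiA F S A) - xiA F S A =
    fun β => (((Real.sqrt (F.wcard (S : Set I)))⁻¹ *
      ((F.d γ)⁻¹ * ∑ η ∈ S, (F.N γ η β : ℝ) * F.d η - (if β ∈ S then F.d β else 0)) : ℝ) : ℂ) •
      (1 : A) := by
  have hs : ∀ c : ℂ, cfaSigma F act γ (c • (1 : A)) = c • (1 : A) := by
    intro c
    unfold cfaSigma
    have := (d_pos F γ).ne'
    rw [map_smul, act.map_one, smul_smul, smul_smul]
    congr 1
    have h2 : (F.d γ : ℂ) ≠ 0 := by exact_mod_cast this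
    push_cast
    field_simp
  funext β
  rw [xiA_eq, Pi.sub_apply]
  unfold FusionDatum.tconv
  simp only [hs]
  rw [finsum_eq_sum_of_support_subset (s := S)]
  · simp only [← Nat.cast_smul_eq_nsmul ℂ, smul_smul, ← Finset.sum_smul, ← sub_smul]
    congr 1
    rw [Finset.sum_congr rfl (g := fun η => ((((Real.sqrt (F.wcard (S : Set I)))⁻¹ * ((F.N γ η β : ℝ) * F.d η) : ℝ)) : ℂ))]
    · rw [← Complex.ofReal_sum, ← Finset.mul_sum, ← Complex.ofReal_mul, ← Complex.ofReal_sub]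
      congr 1
      split_ifs <;> ring
    · intro η hη
      rw [if_pos hη]; push_cast; ring
  · intro x hx
    by_contra hxV
    apply hx
    have : x ∉ S := hxV
    simp [this]


noncomputable def avg (F : FusionDatum I) (act : CFAAction F A) (φ : A →ₗ[ℂ] ℂ)
    (S : Finset I) : A →ₗ[ℂ] ℂ :=
  (((F.wcard (S : Set I))⁻¹ : ℝ) : ℂ) • ∑ α ∈ S, (F.d α : ℂ) • (φ ∘ₗ act.T α)

theorem avg_apply (F : FusionDatum I) (act : CFAAction F A) (φ : A →ₗ[ℂ] ℂ)
    (S : Finset I) (a : A) : avg F act φ S a =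
    (((F.wcard (S : Set I))⁻¹ : ℝ) : ℂ) * ∑ α ∈ S, (F.d α : ℂ) * φ (act.T α a) := by
  simp [avg, LinearMap.sum_apply]

theorem avg_one (F : FusionDatum I) (act : CFAAction F A) (φ : A →ₗ[ℂ] ℂ) (h1 : φ 1 = 1)
    (S : Finset I) (hS : S.Nonempty) : avg F act φ S 1 = 1 := by
  rw [avg_apply]
  simp only [act.map_one, map_smul, h1, smul_eq_mul, mul_one]
  have h := wcard_pos F S hS
  have : ∑ α ∈ S, (F.d α : ℂ) * F.d α = ((F.wcard (S : Set I) : ℝ) : ℂ) := by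
    rw [wcard_coe]; push_cast
    exact Finset.sum_congr rfl fun _ _ => (sq _).symm
  rw [this, ← Complex.ofReal_mul, inv_mul_cancel₀ h.ne', Complex.ofReal_one]

theorem phiT_le (F : FusionDatum I) (act : CFAAction F A) (φ : A →ₗ[ℂ] ℂ)
    (hn : ∀ a, ‖φ a‖ ≤ ‖a‖) (α : I) (a : A) : ‖φ (act.T α a)‖ ≤ F.d α * ‖a‖ :=
  (hn _).trans (act.norm_le α a)

theorem avg_norm (F : FusionDatum I) (act : CFAAction F A) (φ : A →ₗ[ℂ] ℂ)
    (hn : ∀ a, ‖φ a‖ ≤ ‖a‖) (S : Finset I) (hS : S.Nonempty) (a : A) :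
    ‖avg F act φ S a‖ ≤ ‖a‖ := by
  have h := wcard_pos F S hS
  rw [avg_apply, norm_mul, Complex.norm_real, Real.norm_eq_abs, abs_of_pos (inv_pos.mpr h),
    inv_mul_le_iff₀ h]
  refine (norm_sum_le _ _).trans ?_
  rw [wcard_coe, Finset.sum_mul]
  refine Finset.sum_le_sum fun α _ => ?_
  have hd := d_pos F α
  rw [norm_mul, Complex.norm_real, Real.norm_eq_abs, abs_of_pos hd, sq, mul_assoc]
  exact mul_le_mul_of_nonneg_left (phiT_le F act φ hn α a) hd.le

theorem avg_inv (F : FusionDatum I) (act : CFAAction F A) (φ : A →ₗ[ℂ] ℂ)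
    (hn : ∀ a, ‖φ a‖ ≤ ‖a‖) (S : Finset I) (hS : S.Nonempty) (γ : I) (a : A) :
    ‖avg F act φ S (cfaSigma F act γ a) - avg F act φ S a‖ ≤
      F.wcard (F.rBoundary (F.conj γ) (S : Set I)) / F.wcard (S : Set I) * ‖a‖ := by
  have h := wcard_pos F S hS
  let V : Finset I := (S ∪ S.biUnion fun α => (N_finite F α γ).toFinset) ∪
    (rB_finite F (F.conj γ) S).toFinset
  have hV1 : S ⊆ V := Finset.subset_union_left.trans Finset.subset_union_left
  have hV2 : ∀ α ∈ S, ∀ β, 0 < F.N α γ β → β ∈ V := by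
    intro α hα β hβ
    apply Finset.mem_union_left
    apply Finset.mem_union_right
    rw [Finset.mem_biUnion]
    exact ⟨α, hα, by simpa using hβ⟩
  have hV3 : F.rBoundary (F.conj γ) (S : Set I) ⊆ V := by
    intro x hx
    apply Finset.mem_union_right
    simpa using hx
  have hcomp : ∀ α ∈ S, act.T α (act.T γ a) = ∑ β ∈ V, F.N α γ β • act.T β a := by
    intro α hα
    rw [act.comp_eq]
    apply finsum_eq_sum_of_support_subset
    intro β hβ
    apply hV2 α hα
    by_contra h0
    apply hβ
    have : F.N α γ β = 0 := by omega
    simp [this]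
  have e1 : avg F act φ S (cfaSigma F act γ a) = (((F.wcard (S : Set I))⁻¹ : ℝ) : ℂ) *
      ∑ β ∈ V, (((F.d γ)⁻¹ * ∑ η ∈ S, (F.N η γ β : ℝ) * F.d η : ℝ) : ℂ) * φ (act.T β a) := by
    rw [avg_apply]
    congr 1
    have : ∀ α ∈ S, (F.d α : ℂ) * φ (act.T α (cfaSigma F act γ a)) =
        ∑ β ∈ V, (((F.d γ)⁻¹ : ℝ) : ℂ) * ((F.N α γ β : ℂ) * F.d α) * φ (act.T β a) := by
      intro α hα
      unfold cfaSigma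
      rw [map_smul, hcomp α hα, map_smul, map_sum, smul_eq_mul, Finset.mul_sum, Finset.mul_sum]
      refine Finset.sum_congr rfl fun β _ => ?_
      rw [map_nsmul, nsmul_eq_mul]
      ring
    rw [Finset.sum_congr rfl this, Finset.sum_comm]
    refine Finset.sum_congr rfl fun β _ => ?_
    push_cast
    rw [Finset.mul_sum, Finset.sum_mul]
  have e2 : avg F act φ S a = (((F.wcard (S : Set I))⁻¹ : ℝ) : ℂ) *
      ∑ β ∈ V, (((if β ∈ S then F.d β else 0 : ℝ)) : ℂ) * φ (act.T β a) := by
    rw [avg_apply]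
    congr 1
    rw [← Finset.sum_subset hV1]
    · refine Finset.sum_congr rfl fun β hβ => ?_
      rw [if_pos hβ]
    · intro β _ hβ
      simp [hβ]
  rw [e1, e2, ← mul_sub, ← Finset.sum_sub_distrib, norm_mul, Complex.norm_real,
    Real.norm_eq_abs, abs_of_pos (inv_pos.mpr h), div_eq_inv_mul, mul_assoc]
  refine mul_le_mul_of_nonneg_left ?_ (inv_pos.mpr h).le
  rw [wcard_fin F _ (rB_finite F _ S) V hV3, Finset.sum_mul]
  refine (norm_sum_le _ _).trans (Finset.sum_le_sum fun β _ => ?_)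
  rw [← sub_mul, ← Complex.ofReal_sub, norm_mul, Complex.norm_real, Real.norm_eq_abs]
  have hd := d_pos F β
  refine (mul_le_mul (r_bound F γ S β) (phiT_le F act φ hn β a) (norm_nonneg _) ?_).trans ?_
  · split_ifs <;> linarith
  · split_ifs
    · rw [sq, mul_assoc]
    · simp

theorem exists_state (F : FusionDatum I) (Fn : ℕ → Finset I)
    (hne : ∀ n, (Fn n).Nonempty)
    (hFolR : ∀ γ : I, Tendsto
      (fun n => F.wcard (F.rBoundary γ (Fn n : Set I)) / F.wcard (Fn n : Set I))
      atTop (nhds 0)) (act : CFAAction F A) :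
    ∃ ψ : CStarState A, ∀ (α : I) (a : A),
      ψ.toFun (cfaSigma F act α a) = ψ.toFun a := by
  obtain ⟨φ, hφ, hφ1⟩ := exists_dual_vector'' ℂ (1 : A)
  have h1 : (φ : A →ₗ[ℂ] ℂ) 1 = 1 := by
    have : φ (1 : A) = 1 := by rw [hφ1, norm_one]; simp
    exact this
  have hn : ∀ a, ‖(φ : A →ₗ[ℂ] ℂ) a‖ ≤ ‖a‖ := fun a =>
    (φ.le_opNorm a).trans (mul_le_of_le_one_left (norm_nonneg a) hφ)
  let f : ℕ → A →ₗ[ℂ] ℂ := fun n => avg F act (φ : A →ₗ[ℂ] ℂ) (Fn n)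
  have hf : ∀ n a, ‖f n a‖ ≤ ‖a‖ := fun n a => avg_norm F act _ hn _ (hne n) a
  let U : Ultrafilter ℕ := hyperfilter ℕ
  have hU : (U : Filter ℕ) ≤ atTop := by
    rw [← Nat.cofinite_eq_atTop]; exact hyperfilter_le_cofinite
  have hlim : ∀ a, ∃ z, Tendsto (fun n => f n a) U (nhds z) := by
    intro a
    obtain ⟨z, -, hz⟩ := (isCompact_closedBall (0 : ℂ) ‖a‖).ultrafilter_le_nhds
      (U.map fun n => f n a) (by
        rw [le_principal_iff]
        exact Filter.mem_map.mpr (Filter.univ_mem' fun n => by simpa using hf n a))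
    exact ⟨z, hz⟩
  choose g hg using hlim
  let ψ : A →ₗ[ℂ] ℂ :=
    { toFun := g
      map_add' := fun a b => tendsto_nhds_unique (hg (a + b)) (by
        simpa only [map_add] using (hg a).add (hg b))
      map_smul' := fun c a => tendsto_nhds_unique (hg (c • a)) (by
        simpa only [map_smul, RingHom.id_apply] using (hg a).const_smul c) }
  have hψ1 : ψ 1 = 1 := by
    refine tendsto_nhds_unique (hg 1) ?_
    have : (fun n => f n 1) = fun _ => 1 := funext fun n => avg_one F act _ h1 _ (hne n)
    rw [this]; exact tendsto_const_nhds
  have hψn : ∀ a, ‖ψ a‖ ≤ ‖a‖ := fun a =>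
    le_of_tendsto (hg a).norm (Eventually.of_forall fun n => hf n a)
  refine ⟨⟨ψ, hψ1, contractive_pos ψ hψ1 hψn⟩, fun γ a => ?_⟩
  change g _ = g a
  rw [← sub_eq_zero]
  refine tendsto_nhds_unique ((hg (cfaSigma F act γ a)).sub (hg a)) ?_
  refine squeeze_zero_norm (fun n => avg_inv F act _ hn (Fn n) (hne n) γ a) ?_
  simpa using ((hFolR (F.conj γ)).mono_left hU).mul_const ‖a‖

theorem xi_norm (F : FusionDatum I) (act : CFAAction F A) (γ : I) (S : Finset I)
    (hS : S.Nonempty) :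
    norm2A (F.tconv (cfaSigma F act) γ (xiA F S A) - xiA F S A) ≤
    Real.sqrt (F.wcard (F.lBoundary (F.conj γ) (S : Set I)) / F.wcard (S : Set I)) := by
  have h := wcard_pos F S hS
  unfold norm2A
  apply Real.sqrt_le_sqrt
  rw [tconv_xi, innerA_smul_one _ (lB_finite F (F.conj γ) S).toFinset]
  · rw [norm_smul, norm_one, mul_one, Complex.norm_real, Real.norm_eq_abs,
      abs_of_nonneg (Finset.sum_nonneg fun _ _ => sq_nonneg _),
      wcard_fin F _ (lB_finite F (F.conj γ) S) (lB_finite F (F.conj γ) S).toFinset (by simp),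
      div_eq_inv_mul, Finset.mul_sum]
    refine Finset.sum_le_sum fun β hβ => ?_
    have hb := l_bound F γ S β
    rw [mul_pow, inv_pow, Real.sq_sqrt h.le]
    refine mul_le_mul_of_nonneg_left ?_ (inv_pos.mpr h).le
    have hβ' : β ∈ F.lBoundary (F.conj γ) (S : Set I) := by simpa using hβ
    rw [if_pos hβ'] at hb ⊢
    exact sq_le_sq' (abs_le.mp hb).1 (abs_le.mp hb).2
  · intro β hβ
    have hβ' : β ∉ F.lBoundary (F.conj γ) (S : Set I) := by simpa using hβ
    have hb := l_bound F γ S β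
    rw [if_neg hβ'] at hb
    rw [abs_nonpos_iff.mp hb, mul_zero]

end Helpers

/-- under a two-sided Følner condition, any CFA-type action on a
nontrivial unital C*-algebra admits an FA-invariant state, and the canonical
`A`-valued vectors `ξ_n` form a Følner sequence for the normalized action `σ`, i.e.
the action is FA-amenable. -/
theorem stmt15 {I : Type*} [Countable I] (F : FusionDatum I) (Fn : ℕ → Finset I)
    (hne : ∀ n, (Fn n).Nonempty)
    (hFolR : ∀ γ : I, Tendsto
      (fun n => F.wcard (F.rBoundary γ (Fn n : Set I)) / F.wcard (Fn n : Set I))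
      atTop (nhds 0))
    (hFolL : ∀ γ : I, Tendsto
      (fun n => F.wcard (F.lBoundary γ (Fn n : Set I)) / F.wcard (Fn n : Set I))
      atTop (nhds 0))
    {A : Type*} [NormedRing A] [StarRing A] [CStarRing A] [NormedAlgebra ℂ A]
    [StarModule ℂ A] [CompleteSpace A] [Nontrivial A]
    (act : CFAAction F A) :
    (∃ ψ : CStarState A, ∀ (α : I) (a : A),
      ψ.toFun (cfaSigma F act α a) = ψ.toFun a) ∧
    (∀ n, innerA (xiA F (Fn n) A) = 1) ∧
    (∀ (n : ℕ) (α : I) (a : A), xiA F (Fn n) A α * a = a * xiA F (Fn n) A α) ∧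
    ∀ γ : I, Tendsto
      (fun n => norm2A (F.tconv (cfaSigma F act) γ (xiA F (Fn n) A) - xiA F (Fn n) A))
      atTop (nhds 0) := by
  refine ⟨exists_state F Fn hne hFolR act, fun n => ?_, fun n α a => ?_, fun γ => ?_⟩
  · have h := wcard_pos F (Fn n) (hne n)
    rw [xiA_eq, innerA_smul_one _ (Fn n) (fun β hβ => if_neg hβ)]
    have : ∑ β ∈ Fn n, (if β ∈ Fn n then (Real.sqrt (F.wcard (Fn n : Set I)))⁻¹ * F.d β
        else 0) ^ 2 = 1 := by
      rw [Finset.sum_congr rfl (g := fun β => (F.wcard (Fn n : Set I))⁻¹ * F.d β ^ 2),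
        ← Finset.mul_sum, ← wcard_coe, inv_mul_cancel₀ h.ne']
      intro β hβ
      rw [if_pos hβ, mul_pow, inv_pow, Real.sq_sqrt h.le]
    rw [this]; simp
  · unfold xiA
    split_ifs <;> simp
  · refine squeeze_zero (fun n => Real.sqrt_nonneg _)
      (fun n => xi_norm F act γ (Fn n) (hne n)) ?_
    have := (hFolL (F.conj γ)).sqrt
    simpa using this
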